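/- arXiv:1708.04918 — 2 statements merged into one kernel-verified Lean document; each statement's English description precedes it below -/
import Mathlib

section
/- Let α ∈ ℝ, let f(x,y) = y² + x²y + αx⁴, and let h : ℝ² → ℝ² be the diffeomorphism h(x̄,ȳ) = (x̄, −(1/2)x̄² − ȳ). Set λ = 6(α − 1/4). Then the pullback of the asymptotic BDE of f under h equals twice the BDE dy² + (−y + λx²)dx² = 0; precisely, for all (x̄,ȳ) ∈ ℝ² and all v = (v₁,v₂) ∈ ℝ², ω^f_{h(x̄,ȳ)}(Dh_{(x̄,ȳ)}(v)) = 2·(v₂² + (−ȳ + λx̄²)·v₁²). -/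
open Asymptotics Filter Set

noncomputable section

/-- Partial derivative in the first variable (∂/∂x). -/
def pdx (f : ℝ × ℝ → ℝ) (p : ℝ × ℝ) : ℝ := deriv (fun s => f (s, p.2)) p.1

/-- Partial derivative in the second variable (∂/∂y). -/
def pdy (f : ℝ × ℝ → ℝ) (p : ℝ × ℝ) : ℝ := deriv (fun s => f (p.1, s)) p.2

/-- f_xx -/
def fxx (f : ℝ × ℝ → ℝ) : ℝ × ℝ → ℝ := pdx (pdx f)
/-- f_xy -/
def fxy (f : ℝ × ℝ → ℝ) : ℝ × ℝ → ℝ := pdy (pdx f)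
/-- f_yy -/
def fyy (f : ℝ × ℝ → ℝ) : ℝ × ℝ → ℝ := pdy (pdy f)

/-- The discriminant δ = f_xy² − f_xx·f_yy of the asymptotic BDE of `f`. -/
def bdeDiscr (f : ℝ × ℝ → ℝ) : ℝ × ℝ → ℝ := fun p => (fxy f p) ^ 2 - fxx f p * fyy f p

/-- The BDE `a dy² + 2b dxdy + c dx² = 0`, regarded as the family of quadratic
forms `ω_p(v) = a(p)v₂² + 2b(p)v₁v₂ + c(p)v₁²`. -/
def BDE (a b c : ℝ × ℝ → ℝ) : (ℝ × ℝ) → (ℝ × ℝ) → ℝ :=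
  fun p v => a p * v.2 ^ 2 + 2 * b p * v.1 * v.2 + c p * v.1 ^ 2

/-- The asymptotic BDE `f_yy dy² + 2 f_xy dxdy + f_xx dx² = 0` of the surface `z = f(x,y)`. -/
def asymBDE (f : ℝ × ℝ → ℝ) : (ℝ × ℝ) → (ℝ × ℝ) → ℝ := BDE (fyy f) (fxy f) (fxx f)

/-- `j^k f(0) = P` : the degree-k Taylor polynomial of `f` at the origin is `P`,
i.e. `f − P = o(‖(x,y)‖^k)` as `(x,y) → 0`. -/
def HasJetAt0 (f P : ℝ × ℝ → ℝ) (k : ℕ) : Prop :=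
  (fun p => f p - P p) =o[nhds (0 : ℝ × ℝ)] fun p => ‖p‖ ^ k

/-- `γ` is an integral curve of the BDE `ω` on the open interval `I`:
`γ` is C¹ on `I` with nowhere-vanishing derivative annihilating `ω`. -/
def IsIntegralCurveOnBDE (ω : (ℝ × ℝ) → (ℝ × ℝ) → ℝ) (γ : ℝ → ℝ × ℝ) (I : Set ℝ) : Prop :=
  (∃ a b : ℝ, I = Set.Ioo a b) ∧
  ∃ dγ : ℝ → ℝ × ℝ, ContinuousOn dγ I ∧
    ∀ t ∈ I, HasDerivAt γ (dγ t) t ∧ dγ t ≠ 0 ∧ ω (γ t) (dγ t) = 0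

/-- Topological equivalence of two BDEs at the origin: a local homeomorphism
fixing `0` sending integral curves of one to integral curves of the other. -/
def TopEquivAt0 (ω Ω : (ℝ × ℝ) → (ℝ × ℝ) → ℝ) : Prop :=
  ∃ (U V : Set (ℝ × ℝ)) (h hinv : ℝ × ℝ → ℝ × ℝ),
    IsOpen U ∧ IsOpen V ∧ (0 : ℝ × ℝ) ∈ U ∧ (0 : ℝ × ℝ) ∈ V ∧ h 0 = 0 ∧
    ContinuousOn h U ∧ ContinuousOn hinv V ∧
    Set.BijOn h U V ∧ Set.InvOn hinv h U V ∧
    (∀ γ I, IsIntegralCurveOnBDE ω γ I → Set.MapsTo γ I U →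
      ∃ σ J, IsIntegralCurveOnBDE Ω σ J ∧ h '' (γ '' I) = σ '' J) ∧
    (∀ σ J, IsIntegralCurveOnBDE Ω σ J → Set.MapsTo σ J V →
      ∃ γ I, IsIntegralCurveOnBDE ω γ I ∧ hinv '' (σ '' J) = γ '' I)

/-- Smooth equivalence of two BDEs at the origin: a local C^∞ diffeomorphism `h`
fixing `0` pulling one family of quadratic forms back to a nonvanishing multiple
of the other. -/
def SmoothEquivAt0 (ω Ω : (ℝ × ℝ) → (ℝ × ℝ) → ℝ) : Prop :=
  ∃ (U V : Set (ℝ × ℝ)) (h hinv : ℝ × ℝ → ℝ × ℝ) (ρ : ℝ × ℝ → ℝ),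
    IsOpen U ∧ IsOpen V ∧ (0 : ℝ × ℝ) ∈ U ∧ (0 : ℝ × ℝ) ∈ V ∧ h 0 = 0 ∧
    ContDiffOn ℝ (⊤ : ℕ∞) h U ∧ ContDiffOn ℝ (⊤ : ℕ∞) hinv V ∧
    Set.BijOn h U V ∧ Set.InvOn hinv h U V ∧
    ContDiffOn ℝ (⊤ : ℕ∞) ρ U ∧ (∀ p ∈ U, ρ p ≠ 0) ∧
    (∀ p ∈ U, ∀ v : ℝ × ℝ, Ω (h p) (fderiv ℝ h p v) = ρ p * ω p v)

/-- Fiber topological equivalence at `0` of two 2-parameter families of BDEs: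
a homeomorphism `φ` of parameter spaces (onto its image), fixing `0`, such that
corresponding members of the families are topologically equivalent at `0`. -/
def FiberTopEquivAt0 (ω Ω : (ℝ × ℝ) → (ℝ × ℝ) → (ℝ × ℝ) → ℝ) : Prop :=
  ∃ (W : Set (ℝ × ℝ)) (φ ψ : ℝ × ℝ → ℝ × ℝ),
    W ∈ nhds (0 : ℝ × ℝ) ∧ φ 0 = 0 ∧
    ContinuousOn φ W ∧ ContinuousOn ψ (φ '' W) ∧
    Set.InvOn ψ φ W (φ '' W) ∧
    ∀ q ∈ W, TopEquivAt0 (ω q) (Ω (φ q))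

/-- explicit pullback computation for `f = y² + x²y + αx⁴` under
`h(x̄,ȳ) = (x̄, −x̄²/2 − ȳ)`: the pullback of the asymptotic BDE equals twice the
BDE `dy² + (−y + λx²)dx²` with `λ = 6(α − 1/4)`. -/
theorem stmt2 (α : ℝ) (f : ℝ × ℝ → ℝ) (h : ℝ × ℝ → ℝ × ℝ) (lam : ℝ)
    (hdef : f = fun p => p.2 ^ 2 + p.1 ^ 2 * p.2 + α * p.1 ^ 4)
    (hh : h = fun q => (q.1, -(1 / 2) * q.1 ^ 2 - q.2))
    (hlam : lam = 6 * (α - 1 / 4)) :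
    ∀ q v : ℝ × ℝ,
      asymBDE f (h q) (fderiv ℝ h q v) =
        2 * (v.2 ^ 2 + (-q.2 + lam * q.1 ^ 2) * v.1 ^ 2) := by
  intro q v
  have h1 : pdx f = fun p => 2 * p.1 * p.2 + α * (4 * p.1 ^ 3) := by
    funext p
    have h3 : HasDerivAt (fun s : ℝ => p.2 ^ 2 + s ^ 2 * p.2 + α * s ^ 4)
        (2 * p.1 * p.2 + α * (4 * p.1 ^ 3)) p.1 := by
      have := (((hasDerivAt_pow 2 p.1).mul_const p.2).const_add (p.2 ^ 2)).add
        ((hasDerivAt_pow 4 p.1).const_mul α)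
      refine HasDerivAt.congr_deriv this ?_
      push_cast
      ring
    subst hdef
    exact h3.deriv
  have h2 : pdy f = fun p => 2 * p.2 + p.1 ^ 2 := by
    funext p
    have h3 : HasDerivAt (fun s : ℝ => s ^ 2 + p.1 ^ 2 * s + α * p.1 ^ 4)
        (2 * p.2 + p.1 ^ 2) p.2 := by
      have := ((hasDerivAt_pow 2 p.2).add
        ((hasDerivAt_id p.2).const_mul (p.1 ^ 2))).add_const (α * p.1 ^ 4)
      refine HasDerivAt.congr_deriv this ?_
      push_cast
      ring
    subst hdef
    exact h3.deriv
  have hyy : ∀ p, fyy f p = 2 := by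
    intro p
    have h3 : HasDerivAt (fun s : ℝ => 2 * s + p.1 ^ 2) 2 p.2 := by
      have := ((hasDerivAt_id p.2).const_mul 2).add_const (p.1 ^ 2)
      refine HasDerivAt.congr_deriv this ?_
      push_cast
      ring
    unfold fyy
    rw [h2]
    exact h3.deriv
  have hxy : ∀ p, fxy f p = 2 * p.1 := by
    intro p
    have h3 : HasDerivAt (fun s : ℝ => 2 * p.1 * s + α * (4 * p.1 ^ 3)) (2 * p.1) p.2 := by
      have := ((hasDerivAt_id p.2).const_mul (2 * p.1)).add_const (α * (4 * p.1 ^ 3))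
      refine HasDerivAt.congr_deriv this ?_
      push_cast
      ring
    unfold fxy
    rw [h1]
    exact h3.deriv
  have hxx : ∀ p, fxx f p = 2 * p.2 + 12 * α * p.1 ^ 2 := by
    intro p
    have h3 : HasDerivAt (fun s : ℝ => 2 * s * p.2 + α * (4 * s ^ 3))
        (2 * p.2 + 12 * α * p.1 ^ 2) p.1 := by
      have := (((hasDerivAt_id p.1).const_mul 2).mul_const p.2).add
        (((hasDerivAt_pow 3 p.1).const_mul 4).const_mul α)
      refine HasDerivAt.congr_deriv this ?_
      push_cast
      ring
    unfold fxx
    rw [h1]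
    exact h3.deriv
  have hd : fderiv ℝ h q v = (v.1, -q.1 * v.1 - v.2) := by
    have h3 := (hasFDerivAt_fst (𝕜 := ℝ) (E := ℝ) (F := ℝ) (p := q)).prodMk
        ((((hasFDerivAt_fst (𝕜 := ℝ) (E := ℝ) (F := ℝ) (p := q)).pow 2).const_mul
          (-(1 / 2) : ℝ)).sub (hasFDerivAt_snd (𝕜 := ℝ) (E := ℝ) (F := ℝ) (p := q)))
    rw [hh]
    refine (congrArg (fun L : ℝ × ℝ →L[ℝ] ℝ × ℝ => L v) h3.fderiv).trans ?_
    ext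
    · simp
    · simp
      ring
  rw [hd]
  simp only [asymBDE, BDE, hyy, hxy, hxx, hh, hlam]
  ring
end
end

section
/- Let ε ∈ {1,−1}, α, β ∈ ℝ, and let f : ℝ² → ℝ be a smooth function whose 4-jet at the origin is j⁴f(0) = y² + εx⁴ + αx³y + βx²y². Let δ = f_xy² − f_xx·f_yy. Then δ(0) = 0, ∇δ(0) = (0,0), the Hessian matrix of δ at the origin equals [[−48ε, −12α], [−12α, −8β]], and det Hess δ(0) = −48·(3α² − 8εβ). In particular, the origin is a nondegenerate (Morse) critical point of δ if and only if 3α² − 8εβ ≠ 0. -/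
open Asymptotics Filter Set

noncomputable section

/-- smoothness -/
def Sm (u : ℝ × ℝ → ℝ) : Prop := ContDiff ℝ (⊤ : ℕ∞) u

/-- directional derivative -/
def DD (v : ℝ × ℝ) (u : ℝ × ℝ → ℝ) : ℝ × ℝ → ℝ := fun p => fderiv ℝ u p v

theorem Sm.diff {u : ℝ × ℝ → ℝ} (h : Sm u) : Differentiable ℝ u :=
  ContDiff.differentiable h (by simp)

theorem Sm.DD {u : ℝ × ℝ → ℝ} (h : Sm u) (v : ℝ × ℝ) : Sm (DD v u) := by
  have : ContDiff ℝ (⊤ : ℕ∞) (fderiv ℝ u) := ContDiff.fderiv_right h (by simp)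
  exact this.clm_apply contDiff_const

theorem pdx_eq {u : ℝ × ℝ → ℝ} (h : Sm u) : pdx u = DD (1, 0) u := by
  funext p
  have h1 : HasDerivAt (fun s : ℝ => (s, p.2)) ((1 : ℝ), (0 : ℝ)) p.1 :=
    (hasDerivAt_id _).prodMk (hasDerivAt_const _ _)
  exact ((h.diff (p.1, p.2)).hasFDerivAt.comp_hasDerivAt p.1 h1).deriv

theorem pdy_eq {u : ℝ × ℝ → ℝ} (h : Sm u) : pdy u = DD (0, 1) u := by
  funext p
  have h1 : HasDerivAt (fun s : ℝ => (p.1, s)) ((0 : ℝ), (1 : ℝ)) p.2 :=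
    (hasDerivAt_const _ _).prodMk (hasDerivAt_id _)
  exact ((h.diff (p.1, p.2)).hasFDerivAt.comp_hasDerivAt p.2 h1).deriv

theorem DD_comm {u : ℝ × ℝ → ℝ} (h : Sm u) (v w : ℝ × ℝ) : DD v (DD w u) = DD w (DD v u) := by
  funext p
  have hd : Differentiable ℝ (fderiv ℝ u) :=
    (ContDiff.fderiv_right (m := (⊤ : ℕ∞)) h (by simp)).differentiable (by simp)
  have key : ∀ a b : ℝ × ℝ, DD a (DD b u) p = fderiv ℝ (fderiv ℝ u) p a b := by
    intro a b
    have := (hd p).hasFDerivAt.clm_apply (hasFDerivAt_const b p)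
    show fderiv ℝ (fun q => fderiv ℝ u q b) p a = _
    rw [this.fderiv]
    simp
  rw [key, key]
  have hs : IsSymmSndFDerivAt ℝ u p :=
    ContDiffAt.isSymmSndFDerivAt (n := (⊤ : ℕ∞)) (ContDiff.contDiffAt h) (by
      rw [minSmoothness_of_isRCLikeNormedField]; exact WithTop.coe_le_coe.2 le_top)
  exact hs v w

theorem DD_lin {g h : ℝ × ℝ → ℝ} (hg : Sm g) (hh : Sm h) (a b : ℝ) (v : ℝ × ℝ) :
    DD v (fun p => a * g p + b * h p) = fun p => a * DD v g p + b * DD v h p := by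
  funext p
  have := ((hg.diff p).hasFDerivAt.const_mul a).add ((hh.diff p).hasFDerivAt.const_mul b)
  show fderiv ℝ (fun p => a * g p + b * h p) p v = _
  have e := this.fderiv
  simp only [Pi.add_def] at e
  rw [e]
  simp [DD]

theorem DD_mul {g h : ℝ × ℝ → ℝ} (hg : Sm g) (hh : Sm h) (v : ℝ × ℝ) :
    DD v (fun p => g p * h p) = fun p => g p * DD v h p + DD v g p * h p := by
  funext p
  have := ((hg.diff p).hasFDerivAt.mul (hh.diff p).hasFDerivAt)
  show fderiv ℝ (fun p => g p * h p) p v = _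
  have e := this.fderiv
  simp only [Pi.mul_def] at e
  rw [e]
  simp [DD]
  ring

theorem DD_add {g h : ℝ × ℝ → ℝ} (hg : Sm g) (hh : Sm h) (v : ℝ × ℝ) :
    DD v (fun p => g p + h p) = fun p => DD v g p + DD v h p := by
  simpa using DD_lin hg hh 1 1 v

theorem Sm.mul {g h : ℝ × ℝ → ℝ} (hg : Sm g) (hh : Sm h) : Sm (fun p => g p * h p) :=
  ContDiff.mul hg hh

theorem Sm.lin {g h : ℝ × ℝ → ℝ} (hg : Sm g) (hh : Sm h) (a b : ℝ) :
    Sm (fun p => a * g p + b * h p) :=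
  (contDiff_const.mul hg).add (contDiff_const.mul hh)

theorem Sm.add {g h : ℝ × ℝ → ℝ} (hg : Sm g) (hh : Sm h) : Sm (fun p => g p + h p) :=
  ContDiff.add hg hh

theorem DD_split (u : ℝ × ℝ → ℝ) (a b : ℝ) :
    DD (a, b) u = fun p => a * DD (1, 0) u p + b * DD (0, 1) u p := by
  funext p
  have : ((a, b) : ℝ × ℝ) = a • ((1 : ℝ), (0 : ℝ)) + b • ((0 : ℝ), (1 : ℝ)) := by simp
  simp only [DD]
  rw [this, map_add, map_smul, map_smul]
  simp

theorem discr_fst {A B C : ℝ × ℝ → ℝ} (hA : Sm A) (hB : Sm B) (hC : Sm C) (v : ℝ × ℝ) :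
    DD v (fun p => A p ^ 2 - B p * C p) = fun p => 2 * (A p * DD v A p) +
      (-1) * (B p * DD v C p + DD v B p * C p) := by
  have : (fun p => A p ^ 2 - B p * C p) = fun p => 1 * (A p * A p) + (-1) * (B p * C p) := by
    funext p; ring
  rw [this, DD_lin (hA.mul hA) (hB.mul hC), DD_mul hA hA, DD_mul hB hC]
  funext p; ring

theorem discr_snd {A B C : ℝ × ℝ → ℝ} (hA : Sm A) (hB : Sm B) (hC : Sm C) (v w : ℝ × ℝ)
    (p : ℝ × ℝ) (A0 : A p = 0) (B0 : B p = 0) (Av : DD v A p = 0)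
    (Bv : DD v B p = 0) (Bw : DD w B p = 0) :
    DD w (DD v (fun p => A p ^ 2 - B p * C p)) p = - (DD w (DD v B) p * C p) := by
  rw [discr_fst hA hB hC, DD_lin (hA.mul (hA.DD v)) ((hB.mul (hC.DD v)).add ((hB.DD v).mul hC)),
    DD_add (hB.mul (hC.DD v)) ((hB.DD v).mul hC), DD_mul hA (hA.DD v), DD_mul hB (hC.DD v),
    DD_mul (hB.DD v) hC]
  simp only [A0, B0, Av, Bv, Bw]
  ring

theorem iter_line {u : ℝ × ℝ → ℝ} (h : Sm u) (v : ℝ × ℝ) (k : ℕ) :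
    iteratedDeriv k (fun t : ℝ => u (t • v)) = fun t : ℝ => ((DD v)^[k] u) (t • v) := by
  induction k generalizing u with
  | zero => simp
  | succ k ih =>
    rw [iteratedDeriv_succ']
    have : deriv (fun t : ℝ => u (t • v)) = fun t : ℝ => DD v u (t • v) := by
      funext t
      have h1 : HasDerivAt (fun s : ℝ => s • v) v t := by
        simpa using (hasDerivAt_id t).smul_const v
      exact ((h.diff (t • v)).hasFDerivAt.comp_hasDerivAt t h1).deriv
    rw [this, ih (h.DD v)]
    rfl

theorem peel (c : ℝ) (q : ℝ → ℝ) (hq : Continuous q) (n : ℕ)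
    (h : (fun t : ℝ => c + t * q t) =o[nhdsWithin 0 {0}ᶜ] fun t : ℝ => t ^ (n + 1)) :
    c = 0 ∧ q =o[nhdsWithin 0 {0}ᶜ] fun t : ℝ => t ^ n := by
  have hc : c = 0 := by
    have t1 : Tendsto (fun t : ℝ => t ^ (n + 1)) (nhdsWithin 0 {0}ᶜ) (nhds 0) := by
      have : Continuous fun t : ℝ => t ^ (n + 1) := by fun_prop
      simpa using (this.tendsto 0).mono_left nhdsWithin_le_nhds
    have t2 : Tendsto (fun t : ℝ => c + t * q t) (nhdsWithin 0 {0}ᶜ) (nhds c) := by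
      have : Continuous fun t : ℝ => c + t * q t := by fun_prop
      simpa using (this.tendsto 0).mono_left nhdsWithin_le_nhds
    exact tendsto_nhds_unique t2 (h.isBigO.trans_tendsto t1)
  refine ⟨hc, ?_⟩
  subst hc
  have h2 := (isBigO_refl (fun t : ℝ => t⁻¹) (nhdsWithin 0 {0}ᶜ)).mul_isLittleO h
  refine h2.congr' ?_ ?_
  · filter_upwards [self_mem_nhdsWithin] with t ht
    have : t ≠ 0 := ht
    field_simp
    ring
  · filter_upwards [self_mem_nhdsWithin] with t ht
    have : t ≠ 0 := ht
    field_simp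
    ring

theorem peel_all (c0 c1 c2 c3 c4 : ℝ)
    (h : (fun t : ℝ => c0 + t * (c1 + t * (c2 + t * (c3 + t * c4)))) =o[nhds 0]
      fun t : ℝ => t ^ 4) : c0 = 0 ∧ c1 = 0 ∧ c2 = 0 ∧ c3 = 0 ∧ c4 = 0 := by
  have h := h.mono (nhdsWithin_le_nhds (s := {0}ᶜ))
  obtain ⟨h0, h⟩ := peel _ _ (by fun_prop) _ h
  obtain ⟨h1, h⟩ := peel _ _ (by fun_prop) _ h
  obtain ⟨h2, h⟩ := peel _ _ (by fun_prop) _ h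
  obtain ⟨h3, h⟩ := peel _ _ (by fun_prop) _ h
  refine ⟨h0, h1, h2, h3, ?_⟩
  simp only [pow_zero, isLittleO_one_iff] at h
  exact tendsto_nhds_unique tendsto_const_nhds h

theorem jet_dir (ε α β : ℝ) (f : ℝ × ℝ → ℝ) (hf : Sm f)
    (hjet : HasJetAt0 f
      (fun p => p.2 ^ 2 + ε * p.1 ^ 4 + α * p.1 ^ 3 * p.2 + β * p.1 ^ 2 * p.2 ^ 2) 4) (a b : ℝ) :
    DD (a, b) (DD (a, b) f) 0 = 2 * b ^ 2 ∧ DD (a, b) (DD (a, b) (DD (a, b) f)) 0 = 0 ∧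
    DD (a, b) (DD (a, b) (DD (a, b) (DD (a, b) f))) 0 =
      24 * (ε * a ^ 4 + α * a ^ 3 * b + β * a ^ 2 * b ^ 2) := by
  have hl : Continuous (fun t : ℝ => t • ((a, b) : ℝ × ℝ)) := by fun_prop
  have hl0 : Tendsto (fun t : ℝ => t • ((a, b) : ℝ × ℝ)) (nhds 0) (nhds 0) := by
    simpa using hl.tendsto 0
  have h1 := hjet.comp_tendsto hl0
  have h2 : (fun t : ℝ => ‖t • ((a, b) : ℝ × ℝ)‖ ^ 4) =O[nhds 0] fun t : ℝ => t ^ 4 := by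
    refine IsBigO.of_bound (‖((a, b) : ℝ × ℝ)‖ ^ 4) (Eventually.of_forall fun t => ?_)
    rw [norm_smul, mul_pow, norm_mul, norm_pow, norm_pow, norm_pow, norm_norm, norm_norm, mul_comm]
  have h3 := h1.trans_isBigO h2
  have hsm : ContDiff ℝ (⊤ : ℕ∞) (fun t : ℝ => f (t • ((a, b) : ℝ × ℝ))) :=
    ContDiff.comp (g := f) hf (by fun_prop)
  have h4 := taylor_isLittleO_univ (x₀ := 0) (n := 4) (hsm.of_le (WithTop.coe_le_coe.2 le_top))
  simp only [sub_zero] at h4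
  have h5 := h3.sub h4
  simp only [taylor_within_apply, iteratedDerivWithin_univ, iter_line hf,
    Finset.sum_range_succ, Finset.sum_range_zero] at h5
  have h6 := peel_all (f 0) (DD (a, b) f 0) (DD (a, b) (DD (a, b) f) 0 / 2 - b ^ 2)
    (DD (a, b) (DD (a, b) (DD (a, b) f)) 0 / 6)
    (DD (a, b) (DD (a, b) (DD (a, b) (DD (a, b) f))) 0 / 24 -
      (ε * a ^ 4 + α * a ^ 3 * b + β * a ^ 2 * b ^ 2)) (by
      refine h5.congr_left fun t => ?_
      simp [Nat.factorial, Function.iterate_succ_apply']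
      ring)
  obtain ⟨-, -, h2, h3, h4⟩ := h6
  refine ⟨by linarith, by linarith, by linarith⟩

/-- linear combination -/
def LL (a b : ℝ) (g h : ℝ × ℝ → ℝ) : ℝ × ℝ → ℝ := fun p => a * g p + b * h p

theorem jet_coeffs (ε α β : ℝ) (f : ℝ × ℝ → ℝ) (hf : Sm f)
    (hjet : HasJetAt0 f
      (fun p => p.2 ^ 2 + ε * p.1 ^ 4 + α * p.1 ^ 3 * p.2 + β * p.1 ^ 2 * p.2 ^ 2) 4)
    (X Y : (ℝ × ℝ → ℝ) → ℝ × ℝ → ℝ) (hX : X = DD (1, 0)) (hY : Y = DD (0, 1)) :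
    (X (X f) 0 = 0 ∧ Y (X f) 0 = 0 ∧ Y (Y f) 0 = 2) ∧
    (X (X (X f)) 0 = 0 ∧ Y (X (X f)) 0 = 0 ∧ Y (Y (X f)) 0 = 0) ∧
    (X (X (X (X f))) 0 = 24 * ε ∧ Y (X (X (X f))) 0 = 6 * α ∧ Y (Y (X (X f))) 0 = 4 * β) := by
  have sX : ∀ u, Sm u → Sm (X u) := fun u hu => hX ▸ hu.DD _
  have sY : ∀ u, Sm u → Sm (Y u) := fun u hu => hY ▸ hu.DD _
  have cm : ∀ u, Sm u → X (Y u) = Y (X u) := fun u hu => by rw [hX, hY]; exact DD_comm hu _ _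
  have sl : ∀ (a b : ℝ) g h, Sm g → Sm h → Sm (LL a b g h) :=
    fun a b g h hg hh => hg.lin hh a b
  have lX : ∀ (a b : ℝ) g h, Sm g → Sm h →
      X (LL a b g h) = LL a b (X g) (X h) :=
    fun a b g h hg hh => hX ▸ DD_lin hg hh a b _
  have lY : ∀ (a b : ℝ) g h, Sm g → Sm h →
      Y (LL a b g h) = LL a b (Y g) (Y h) :=
    fun a b g h hg hh => hY ▸ DD_lin hg hh a b _
  have key := jet_dir ε α β f hf hjet
  have sp : ∀ (a b : ℝ) u, DD (a, b) u = LL a b (X u) (Y u) :=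
    fun a b u => by rw [hX, hY]; exact DD_split u a b
  simp only [sp] at key
  simp (config := { maxDischargeDepth := 20 }) only [lX, lY, sl, sX, sY, hf, cm] at key
  simp only [LL] at key
  obtain ⟨a2, a3, a4⟩ := key 1 0
  obtain ⟨b2, b3, b4⟩ := key 0 1
  obtain ⟨c2, c3, c4⟩ := key 1 1
  obtain ⟨d2, d3, d4⟩ := key 1 (-1)
  obtain ⟨e2, e3, e4⟩ := key 1 2
  refine ⟨⟨?_, ?_, ?_⟩, ⟨?_, ?_, ?_⟩, ?_, ?_, ?_⟩ <;> linarith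

/-- for smooth `f` with `j⁴f(0) = y² + εx⁴ + αx³y + βx²y²`
(`ε = ±1`), the discriminant `δ` vanishes at `0` together with its gradient,
`Hess δ(0) = [[−48ε, −12α], [−12α, −8β]]`, `det Hess δ(0) = −48(3α² − 8εβ)`,
and `0` is a nondegenerate critical point of `δ` iff `3α² − 8εβ ≠ 0`. -/
theorem stmt4 (ε α β : ℝ) (hε : ε = 1 ∨ ε = -1) (f : ℝ × ℝ → ℝ)
    (hf : ContDiff ℝ (⊤ : ℕ∞) f)
    (hjet : HasJetAt0 f
      (fun p => p.2 ^ 2 + ε * p.1 ^ 4 + α * p.1 ^ 3 * p.2 + β * p.1 ^ 2 * p.2 ^ 2) 4) :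
    bdeDiscr f 0 = 0 ∧
    (pdx (bdeDiscr f) 0, pdy (bdeDiscr f) 0) = (0, 0) ∧
    (!![pdx (pdx (bdeDiscr f)) 0, pdy (pdx (bdeDiscr f)) 0;
        pdx (pdy (bdeDiscr f)) 0, pdy (pdy (bdeDiscr f)) 0] =
      !![-48 * ε, -12 * α; -12 * α, -8 * β]) ∧
    Matrix.det !![pdx (pdx (bdeDiscr f)) 0, pdy (pdx (bdeDiscr f)) 0;
        pdx (pdy (bdeDiscr f)) 0, pdy (pdy (bdeDiscr f)) 0] =
      -48 * (3 * α ^ 2 - 8 * ε * β) ∧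
    (Matrix.det !![pdx (pdx (bdeDiscr f)) 0, pdy (pdx (bdeDiscr f)) 0;
        pdx (pdy (bdeDiscr f)) 0, pdy (pdy (bdeDiscr f)) 0] ≠ 0 ↔
      3 * α ^ 2 - 8 * ε * β ≠ 0) := by
  have hs : Sm f := hf
  obtain ⟨⟨xx, xy, yy⟩, ⟨xxx, xxy, xyy⟩, xxxx, xxxy, xxyy⟩ :=
    jet_coeffs ε α β f hs hjet _ _ rfl rfl
  have hA := (hs.DD (1, 0)).DD (0, 1)
  have hB := (hs.DD (1, 0)).DD (1, 0)
  have hC := (hs.DD (0, 1)).DD (0, 1)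
  have xyx : DD (1, 0) (DD (0, 1) (DD (1, 0) f)) 0 = 0 := by
    rw [DD_comm (hs.DD _)]; exact xxy
  have hδ : bdeDiscr f = fun p => (DD (0, 1) (DD (1, 0) f) p) ^ 2 -
      DD (1, 0) (DD (1, 0) f) p * DD (0, 1) (DD (0, 1) f) p := by
    unfold bdeDiscr fxx fxy fyy
    rw [pdx_eq hs, pdy_eq hs, pdx_eq (hs.DD _), pdy_eq (hs.DD _), pdy_eq (hs.DD _)]
  have hsδ : Sm (bdeDiscr f) := by
    rw [hδ]
    exact ContDiff.sub (ContDiff.pow hA 2) (ContDiff.mul hB hC)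
  have e1 : pdx (pdx (bdeDiscr f)) 0 = -48 * ε := by
    rw [pdx_eq hsδ, pdx_eq (hsδ.DD _), hδ, discr_snd hA hB hC _ _ _ xy xx xyx xxx xxx, xxxx, yy]
    ring
  have e2 : pdy (pdx (bdeDiscr f)) 0 = -12 * α := by
    rw [pdx_eq hsδ, pdy_eq (hsδ.DD _), hδ, discr_snd hA hB hC _ _ _ xy xx xyx xxx xxy, xxxy, yy]
    ring
  have e3 : pdx (pdy (bdeDiscr f)) 0 = -12 * α := by
    rw [← e2, pdx_eq hsδ, pdy_eq (hsδ.DD _), pdy_eq hsδ, pdx_eq (hsδ.DD _), DD_comm hsδ]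
  have e4 : pdy (pdy (bdeDiscr f)) 0 = -8 * β := by
    rw [pdy_eq hsδ, pdy_eq (hsδ.DD _), hδ, discr_snd hA hB hC _ _ _ xy xx xyy xxy xxy, xxyy, yy]
    ring
  have edet : Matrix.det !![pdx (pdx (bdeDiscr f)) 0, pdy (pdx (bdeDiscr f)) 0;
        pdx (pdy (bdeDiscr f)) 0, pdy (pdy (bdeDiscr f)) 0] =
      -48 * (3 * α ^ 2 - 8 * ε * β) := by
    rw [Matrix.det_fin_two_of, e1, e2, e3, e4]
    ring
  refine ⟨?_, ?_, ?_, edet, ?_⟩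
  · rw [hδ]
    simp only [xx, xy]
    ring
  · rw [pdx_eq hsδ, pdy_eq hsδ, hδ, discr_fst hA hB hC, discr_fst hA hB hC]
    simp [xx, xy, xxx, xxy]
  · rw [e1, e2, e3, e4]
  · rw [edet]
    simp
end
end
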